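/- For all positive integers k and d with d ≥ k+1, every finite simple graph G of tree-depth at most d satisfies f_k(G) ≤ (2k)^{k+1}·C(d, k+1), where C(d,k+1) is the binomial coefficient (d choose k+1). -/

import Mathlib

open scoped Classical

namespace InducedArboricity

/-- The edges of the subgraph of `G` induced by vertex set `S`, viewed as edges of `G`. -/
def forestEdges {V : Type*} (G : SimpleGraph V) (S : Set V) : Set (Sym2 V) :=
  {e | e ∈ G.edgeSet ∧ ∀ x ∈ e, x ∈ S}

/-- The number of edges of the connected component of `v` in `H`. -/
noncomputable def compEdgeCount {W : Type*} (H : SimpleGraph W) (v : W) : ℕ :=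
  {e | e ∈ H.edgeSet ∧ ∀ x ∈ e, H.Reachable v x}.ncard

/-- `S` induces a `k`-strong forest in `G`: the induced subgraph is acyclic and each of its
connected components has at least `k` edges. -/
def IsStrongForest {V : Type*} (G : SimpleGraph V) (k : ℕ) (S : Set V) : Prop :=
  (G.induce S).IsAcyclic ∧ ∀ v : S, k ≤ compEdgeCount (G.induce S) v

/-- An edge `e` of `G` is `k`-valid if it lies in some `k`-strong forest of `G`. -/
def KValid {V : Type*} (G : SimpleGraph V) (k : ℕ) (e : Sym2 V) : Prop :=
  ∃ S : Set V, IsStrongForest G k S ∧ e ∈ forestEdges G S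

/-- The `k`-strong induced arboricity: the least number of `k`-strong forests of `G`
covering all `k`-valid edges of `G`. -/
noncomputable def fStrong {V : Type*} (G : SimpleGraph V) (k : ℕ) : ℕ :=
  sInf {N | ∃ F : Fin N → Set V,
    (∀ i, IsStrongForest G k (F i)) ∧
    ∀ e : Sym2 V, KValid G k e → ∃ i, e ∈ forestEdges G (F i)}

/-- `G` is a `d`-shallow minor of `H`. -/
def IsShallowMinor {V W : Type*} (d : ℕ) (G : SimpleGraph V) (H : SimpleGraph W) : Prop :=
  ∃ B : V → Set W,
    Pairwise (Function.onFun Disjoint B) ∧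
    (∀ v, ∃ c : B v, ∀ y : B v,
      (H.induce (B v)).Reachable c y ∧ (H.induce (B v)).dist c y ≤ d) ∧
    (∀ u v, G.Adj u v → ∃ x ∈ B u, ∃ y ∈ B v, H.Adj x y)

/-- A class of finite simple graphs, one set of graphs for each number of vertices. -/
def GraphClass : Type :=
  ∀ n : ℕ, Set (SimpleGraph (Fin n))

/-- A class of graphs has bounded expansion if for every `d` there is a constant `a` such that
every `d`-shallow minor of a member of the class has at most `a` times as many edges
as vertices. -/
def BoundedExpansion (C : GraphClass) : Prop :=
  ∀ d : ℕ, ∃ a : ℕ, ∀ (m : ℕ) (G : SimpleGraph (Fin m)),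
    (∃ n : ℕ, ∃ H ∈ C n, IsShallowMinor d G H) → G.edgeSet.ncard ≤ a * m

/-- A class of graphs is nowhere dense if for every `d` some graph is not a `d`-shallow minor
of any member of the class. -/
def NowhereDense (C : GraphClass) : Prop :=
  ∀ d : ℕ, ∃ (m : ℕ) (G : SimpleGraph (Fin m)), ¬ ∃ n : ℕ, ∃ H ∈ C n, IsShallowMinor d G H

/-- The closed neighborhood of `v` in `G`. -/
def closedNbr {V : Type*} (G : SimpleGraph V) (v : V) : Set V :=
  insert v (G.neighborSet v)

/-- The sum of the labels over the closed neighborhood of `v`. -/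
noncomputable def closedNbrSum {V : Type*} [Fintype V] (G : SimpleGraph V)
    (f : V → ℕ) (v : V) : ℕ :=
  ∑ x : V, if x ∈ closedNbr G v then f x else 0

/-- A labeling is distinguishing if adjacent vertices with different closed neighborhoods
receive different label sums over their closed neighborhoods. -/
def Distinguishing {V : Type*} [Fintype V] (G : SimpleGraph V) (f : V → ℕ) : Prop :=
  ∀ u v : V, G.Adj u v → closedNbr G u ≠ closedNbr G v →
    closedNbrSum G f u ≠ closedNbrSum G f v

/-- The adjacent closed vertex-distinguishing number of `G`. -/
noncomputable def disNumber {V : Type*} [Fintype V] (G : SimpleGraph V) : ℕ :=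
  sInf {L | 1 ≤ L ∧ ∃ f : V → ℕ, (∀ v, 1 ≤ f v ∧ f v ≤ L) ∧ Distinguishing G f}

/-- A proper coloring in which any two color classes together induce a forest. -/
def IsAcyclicColoring {V : Type*} (G : SimpleGraph V) {m : ℕ} (c : V → Fin m) : Prop :=
  (∀ u v : V, G.Adj u v → c u ≠ c v) ∧
  ∀ i j : Fin m, (G.induce {v | c v = i ∨ c v = j}).IsAcyclic

/-- The acyclic chromatic number of `G`. -/
noncomputable def chiAcyc {V : Type*} (G : SimpleGraph V) : ℕ :=
  sInf {m | ∃ c : V → Fin m, IsAcyclicColoring G c}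

/-- The edge arboricity of `G`: the least number of (not necessarily induced) forests
covering all edges of `G`. -/
noncomputable def arboricity {V : Type*} (G : SimpleGraph V) : ℕ :=
  sInf {N | ∃ F : Fin N → SimpleGraph V,
    (∀ i, F i ≤ G ∧ (F i).IsAcyclic) ∧
    ∀ e ∈ G.edgeSet, ∃ i, e ∈ (F i).edgeSet}

/-- `G` admits a tree decomposition of width at most `t`. -/
def HasTreewidthAtMost {V : Type*} (G : SimpleGraph V) (t : ℕ) : Prop :=
  ∃ (ι : Type) (T : SimpleGraph ι) (B : ι → Finset V),
    T.IsTree ∧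
    (∀ e ∈ G.edgeSet, ∃ i, ∀ x ∈ e, x ∈ B i) ∧
    (∀ v : V, (T.induce {i | v ∈ B i}).Connected) ∧
    (∀ i, (B i).card ≤ t + 1)

/-- The tree-width of `G`. -/
noncomputable def treewidth {V : Type*} (G : SimpleGraph V) : ℕ :=
  sInf {t | HasTreewidthAtMost G t}

/-- `G` has tree-depth at most `d`: there is a "forest order" on the vertices (the
ancestor order of a rooted spanning forest) in which ancestor sets are chains of at most
`d` vertices and endpoints of edges of `G` are comparable.  Equivalently, every connected
component of `G` is a subgraph of the transitive closure of a rooted tree of depth `d`. -/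
def HasTreedepthAtMost {V : Type*} (G : SimpleGraph V) (d : ℕ) : Prop :=
  ∃ le : V → V → Prop, IsPartialOrder V le ∧
    (∀ v : V, IsChain le {u | le u v}) ∧
    (∀ u v : V, G.Adj u v → le u v ∨ le v u) ∧
    (∀ v : V, {u | le u v}.ncard ≤ d)

/-- The tree-depth of `G`. -/
noncomputable def treedepth {V : Type*} (G : SimpleGraph V) : ℕ :=
  sInf {d | HasTreedepthAtMost G d}

/-- `G` is a minor of `H`, witnessed by disjoint connected branch sets. -/
def IsMinorOf {V W : Type*} (G : SimpleGraph V) (H : SimpleGraph W) : Prop :=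
  ∃ B : V → Set W,
    Pairwise (Function.onFun Disjoint B) ∧
    (∀ v, (B v).Nonempty) ∧
    (∀ v, (H.induce (B v)).Connected) ∧
    (∀ u v, G.Adj u v → ∃ x ∈ B u, ∃ y ∈ B v, H.Adj x y)

/-- A class of graphs closed under taking minors. -/
def MinorClosed (C : GraphClass) : Prop :=
  ∀ (m n : ℕ) (G : SimpleGraph (Fin m)) (H : SimpleGraph (Fin n)),
    H ∈ C n → IsMinorOf G H → G ∈ C m

/-- Planarity, via Wagner's characterization: no `K₅` and no `K₃,₃` minor. -/
def IsPlanar {V : Type*} (G : SimpleGraph V) : Prop :=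
  ¬ IsMinorOf (SimpleGraph.completeGraph (Fin 5)) G ∧
  ¬ IsMinorOf (completeBipartiteGraph (Fin 3) (Fin 3)) G

/-!
Every `k`-valid edge lies in an induced tree on `k + 1` vertices, which meets at most `k + 1` levels
of the forest order; choosing those levels in all possible ways reduces the theorem to tree-depth
`k + 1`.

In that case, fix for every `k`-valid edge `uv` with `u < v` a tree containing it and a walk in that
tree from `u` to its root. For each level `i` between the root and `v`, let `c` be the first
vertex of the walk that leaves the subtree above the level-`i + 1` ancestor of `v`. The edge is rich
at `i` if the level-`i` ancestor of `v` has at least `k` children above which `c` has a neighbour.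
Record the levels of `v` and of all vertices `c`, at most `2 ^ (k + 1)` possibilities, and, on the
levels above the last rich one, which of fewer than `k` children leads to `v`, at most
`k ^ (k + 1)` possibilities. Among edges with the same record, the ancestor of `v` just above the
last rich level, or at the level of the root, determines the edge.

The edges with a given record therefore lie in a single strong forest. If some level is rich, the
chosen trees are cut down to petals above the children at the last rich level; the petals at the
same vertex `c` share only `c`, and there are at least `k` of them once single edges are added
above the remaining children. If no level is rich, the chosen trees with pairwise different roots
are disjoint and have no edges between them.
-/

open SimpleGraph

section Induced

variable {V : Type*} {G : SimpleGraph V} {S K : Set V}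

lemma isAcyclic_induce_mono (hKS : K ⊆ S) (hS : (G.induce S).IsAcyclic) :
    (G.induce K).IsAcyclic :=
  hS.comap (induceHomOfLE G hKS).toHom (induceHomOfLE G hKS).injective

lemma exists_adj_mem_notMem (hS : (G.induce S).Connected) (hKS : K ⊆ S) (hK : K.Nonempty)
    (hSK : ¬ S ⊆ K) : ∃ x ∈ K, ∃ w ∈ S, w ∉ K ∧ G.Adj x w := by
  obtain ⟨z, hz⟩ := hK
  obtain ⟨r, hr, hrK⟩ := Set.not_subset.mp hSK
  obtain ⟨p⟩ := hS.preconnected ⟨z, hKS hz⟩ ⟨r, hr⟩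
  obtain ⟨d, -, hfst, hsnd⟩ := p.exists_boundary_dart {x | x.1 ∈ K} hz hrK
  exact ⟨d.fst, hfst, d.snd, d.snd.2, hsnd, d.adj⟩

lemma connected_induce_insert {x w : V} (hK : (G.induce K).Connected) (hx : x ∈ K)
    (hxw : G.Adj x w) : (G.induce (insert w K)).Connected := by
  rw [← Set.singleton_union]
  exact connected_induce_union .of_subsingleton hK.preconnected (Set.mem_singleton w) hx hxw.symm

lemma exists_connected_superset_ncard_eq [Finite V] (hS : (G.induce S).Connected)
    (hK : (G.induce K).Connected) (hKS : K ⊆ S) {n : ℕ} (hKn : K.ncard ≤ n)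
    (hnS : n ≤ S.ncard) :
    ∃ L, K ⊆ L ∧ L ⊆ S ∧ (G.induce L).Connected ∧ L.ncard = n := by
  obtain ⟨L, hKL, hmax⟩ := Finite.exists_le_maximal
    (p := fun L : Set V ↦ L ⊆ S ∧ (G.induce L).Connected ∧ L.ncard ≤ n) ⟨hKS, hK, hKn⟩
  obtain ⟨hLS, hL, hLn⟩ := hmax.prop
  refine ⟨L, hKL, hLS, hL, hLn.antisymm (not_lt.mp fun hlt ↦ ?_)⟩
  have hSL : ¬ S ⊆ L := fun h ↦ (hnS.trans (Set.ncard_le_ncard h)).not_gt hlt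
  obtain ⟨x, hx, w, hw, hwL, hxw⟩ :=
    exists_adj_mem_notMem hS hLS (Set.nonempty_coe_sort.mp hL.nonempty) hSL
  have hins : insert w L ⊆ L := hmax.le_of_ge
    ⟨Set.insert_subset hw hLS, connected_induce_insert hL hx hxw,
      by rwa [Set.ncard_insert_of_notMem hwL]⟩ (Set.subset_insert w L)
  exact hwL (hins (Set.mem_insert w L))

lemma reachable_of_adj_imp {W : Type*} {H : SimpleGraph W} {f : V → W}
    (hf : ∀ x y, G.Adj x y → H.Reachable (f x) (f y)) {x y : V} (hxy : G.Reachable x y) :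
    H.Reachable (f x) (f y) := by
  obtain ⟨p⟩ := hxy
  induction p with
  | nil => rfl
  | cons h _ ih => exact (hf _ _ h).trans ih

-- Collapsing everything outside `P` to `c` is a retraction onto `P`; it would carry a path
-- avoiding the bridge `ab` of `G.induce P` from `S` to `P`.
lemma isBridge_induce_of_attached {P : Set V} {c : V} (hc : c ∈ P)
    (hP : (G.induce P).IsAcyclic) (hatt : ∀ x ∈ P, ∀ y ∈ S, y ∉ P → G.Adj x y → x = c)
    {a b : S} (ha : ↑a ∈ P) (hb : ↑b ∈ P) (hab : G.Adj a b) :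
    (G.induce S).IsBridge s(a, b) := by
  have hbridge : (G.induce P).IsBridge s(⟨a, ha⟩, ⟨b, hb⟩) :=
    isAcyclic_iff_forall_adj_isBridge.mp hP hab
  rw [isBridge_iff] at hbridge ⊢
  let ρ : S → P := fun z ↦ if hz : ↑z ∈ P then ⟨z, hz⟩ else ⟨c, hc⟩
  have hρ : ∀ (z : S) (hz : ↑z ∈ P), ρ z = ⟨z, hz⟩ := fun z hz ↦ dif_pos hz
  have hρc : ∀ z : S, ↑z ∉ P → ρ z = ⟨c, hc⟩ := fun z hz ↦ dif_neg hz
  intro hreach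
  rw [← hρ a ha, ← hρ b hb] at hbridge
  refine hbridge (reachable_of_adj_imp (fun x y hxy ↦ ?_) hreach)
  simp only [deleteEdges_adj, comap_adj, Function.Embedding.subtype_apply,
    Set.mem_singleton_iff] at hxy
  by_cases hx : ↑x ∈ P <;> by_cases hy : ↑y ∈ P
  · refine Adj.reachable ?_
    rw [hρ a ha, hρ b hb, hρ x hx, hρ y hy]
    simpa [Subtype.ext_iff] using hxy
  · have hxc := hatt x hx y y.2 hy hxy.1
    simp [hρ x hx, hρc y hy, hxc]
  · have hyc := hatt y hy x x.2 hx hxy.1.symm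
    simp [hρc x hx, hρ y hy, hyc]
  · rw [hρc x hx, hρc y hy]

lemma isAcyclic_induce_iUnion {ι : Sort*} {P : ι → Set V} {c : ι → V} (hc : ∀ i, c i ∈ P i)
    (hP : ∀ i, (G.induce (P i)).IsAcyclic)
    (hatt : ∀ i j, ∀ x ∈ P i, x ≠ c i → ∀ y ∈ P j, G.Adj x y → y ∈ P i)
    (hcc : ∀ i j, ¬ G.Adj (c i) (c j)) : (G.induce (⋃ i, P i)).IsAcyclic := by
  refine isAcyclic_iff_forall_adj_isBridge.mpr fun a b hab ↦ ?_
  have hab : G.Adj a b := hab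
  have hbridge : ∀ i, ↑a ∈ P i → ↑b ∈ P i → (G.induce (⋃ i, P i)).IsBridge s(a, b) :=
    fun i ha hb ↦ isBridge_induce_of_attached (hc i) (hP i)
      (fun x hx y hy hyi hxy ↦ by
        obtain ⟨j, hyj⟩ := Set.mem_iUnion.mp hy
        by_contra hxc
        exact hyi (hatt i j x hx hxc y hyj hxy)) ha hb hab
  obtain ⟨i, hai⟩ := Set.mem_iUnion.mp a.2
  obtain ⟨j, hbj⟩ := Set.mem_iUnion.mp b.2
  by_cases hac : ↑a = c i
  · have hbc : ↑b ≠ c j := fun hbc ↦ hcc i j (hac ▸ hbc ▸ hab)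
    exact hbridge j (hatt j i b hbj hbc a hai hab.symm) hbj
  · exact hbridge i hai (hatt i j a hai hac b hbj hab)

lemma isAcyclic_induce_pair (u v : V) : (G.induce {u, v}).IsAcyclic :=
  .of_card_le_two <| (Set.encard_insert_le {v} u).trans <| by simp [one_add_one_eq_two]

lemma mk_mem_forestEdges {u v : V} : s(u, v) ∈ forestEdges G S ↔ G.Adj u v ∧ u ∈ S ∧ v ∈ S :=
  and_congr Iff.rfl Sym2.ball

end Induced

section StrongForest

variable {V : Type*} [Finite V] {G : SimpleGraph V} {k : ℕ} {S : Set V}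

lemma compEdgeCount_add_one (hG : G.IsAcyclic) (v : V) :
    compEdgeCount G v + 1 = (G.connectedComponentMk v).supp.ncard := by
  set C := G.connectedComponentMk v
  have hcard := (isTree_iff_connected_and_card.mp (hG.isTree_connectedComponent C)).2
  have hedges : {e | e ∈ G.edgeSet ∧ ∀ x ∈ e, G.Reachable v x} =
      Sym2.map Subtype.val '' C.toSimpleGraph.edgeSet := by
    ext e
    induction e using Sym2.ind with | _ a b =>
    constructor
    · rintro ⟨hab, hreach⟩
      have hmem : ∀ x ∈ s(a, b), x ∈ C.supp := fun x hx ↦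
        ConnectedComponent.sound (hreach x hx).symm
      exact ⟨s(⟨a, hmem a (Sym2.mem_mk_left a b)⟩, ⟨b, hmem b (Sym2.mem_mk_right a b)⟩), hab, rfl⟩
    · rintro ⟨e, he, heq⟩
      induction e using Sym2.ind with | _ a' b' =>
      have hreach : ∀ x : C, G.Reachable v x := fun x ↦ (ConnectedComponent.exact x.2).symm
      rw [← heq]
      refine ⟨he, fun x hx ↦ ?_⟩
      rcases Sym2.mem_iff.mp hx with rfl | rfl
      exacts [hreach a', hreach b']
  rw [compEdgeCount, hedges,
    Set.ncard_image_of_injective _ (Sym2.map.injective Subtype.val_injective)]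
  exact hcard

lemma isStrongForest_iff : IsStrongForest G k S ↔ (G.induce S).IsAcyclic ∧
    ∀ z ∈ S, ∃ Z ⊆ S, z ∈ Z ∧ (G.induce Z).Connected ∧ k < Z.ncard := by
  refine and_congr_right fun hS ↦ ?_
  simp only [Subtype.forall]
  refine forall₂_congr fun z hz ↦ ?_
  rw [← Nat.succ_le_succ_iff, Nat.succ_eq_add_one, Nat.succ_eq_add_one,
    compEdgeCount_add_one hS, Nat.add_one_le_iff]
  set C := (G.induce S).connectedComponentMk ⟨z, hz⟩
  constructor
  · intro hk
    have e : C.toSimpleGraph ≃g G.induce (Subtype.val '' C.supp) :=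
      ⟨Equiv.Set.image _ _ Subtype.val_injective, Iff.rfl⟩
    refine ⟨Subtype.val '' C.supp, Subtype.coe_image_subset _ _, ⟨⟨z, hz⟩, rfl, rfl⟩,
      e.connected_iff.mp C.connected_toSimpleGraph, ?_⟩
    rwa [Set.ncard_image_of_injective _ Subtype.val_injective]
  · rintro ⟨Z, hZS, hzZ, hZ, hk⟩
    have hZC : Z ⊆ Subtype.val '' C.supp := fun x hx ↦ by
      refine ⟨⟨x, hZS hx⟩, ConnectedComponent.sound ?_, rfl⟩
      exact (hZ.preconnected ⟨x, hx⟩ ⟨z, hzZ⟩).map (induceHomOfLE G hZS).toHom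
    rw [← Set.ncard_image_of_injective C.supp Subtype.val_injective]
    exact hk.trans_le (Set.ncard_le_ncard hZC)

lemma IsStrongForest.of_connected (hS : (G.induce S).Connected) (hac : (G.induce S).IsAcyclic)
    (hk : k < S.ncard) : IsStrongForest G k S :=
  isStrongForest_iff.mpr ⟨hac, fun _ hz ↦ ⟨S, subset_rfl, hz, hS, hk⟩⟩

lemma KValid.exists_tree (hk : 1 ≤ k) {u v : V} (h : KValid G k s(u, v)) :
    ∃ K : Set V, u ∈ K ∧ v ∈ K ∧ (G.induce K).Connected ∧ (G.induce K).IsAcyclic ∧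
      K.ncard = k + 1 := by
  obtain ⟨S, hS, huv⟩ := h
  obtain ⟨huv, huS, hvS⟩ := mk_mem_forestEdges.mp huv
  obtain ⟨hac, hcomp⟩ := isStrongForest_iff.mp hS
  obtain ⟨Z, hZS, huZ, hZ, hkZ⟩ := hcomp u huS
  obtain ⟨K, hK, hKZ, hKconn, hKcard⟩ := exists_connected_superset_ncard_eq
    (connected_induce_insert hZ huZ huv) (induce_pair_connected_of_adj huv)
    (Set.insert_subset (Set.mem_insert_of_mem v huZ)
      (Set.singleton_subset_iff.mpr (Set.mem_insert v Z)))
    (by rw [Set.ncard_pair huv.ne]; lia)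
    (hkZ.trans_le (Set.ncard_le_ncard (Set.subset_insert v Z)))
  exact ⟨K, hK (by simp), hK (by simp), hKconn,
    isAcyclic_induce_mono (hKZ.trans (Set.insert_subset hvS hZS)) hac, hKcard⟩

lemma isStrongForest_induce_iff {W : Set V} {T : Set W} :
    IsStrongForest (G.induce W) k T ↔ IsStrongForest G k (Subtype.val '' T) := by
  have e : ∀ U : Set W, (G.induce W).induce U ≃g G.induce (Subtype.val '' U) := fun _ ↦
    ⟨Equiv.Set.image _ _ Subtype.val_injective, Iff.rfl⟩
  rw [isStrongForest_iff, isStrongForest_iff, (e T).isAcyclic_iff, Set.forall_mem_image]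
  simp only [Set.exists_subset_image_iff, Subtype.val_injective.mem_set_image,
    (e _).connected_iff, Set.ncard_image_of_injective _ Subtype.val_injective]

end StrongForest

section StrongCover

variable {V : Type*} {G : SimpleGraph V} {k : ℕ}

/-- A family of `k`-strong forests of `G` covering all `k`-valid edges; `fStrong G k` is the least
size of such a family. -/
def IsStrongCover (G : SimpleGraph V) (k : ℕ) {ι : Sort*} (F : ι → Set V) : Prop :=
  (∀ i, IsStrongForest G k (F i)) ∧ ∀ e, KValid G k e → ∃ i, e ∈ forestEdges G (F i)

lemma fStrong_le_card {ι : Type*} [Fintype ι] {F : ι → Set V} (hF : IsStrongCover G k F) :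
    fStrong G k ≤ Fintype.card ι := by
  refine Nat.sInf_le ⟨F ∘ (Fintype.equivFin ι).symm, fun _ ↦ hF.1 _, fun e he ↦ ?_⟩
  obtain ⟨i, hi⟩ := hF.2 e he
  exact ⟨Fintype.equivFin ι i, by simpa using hi⟩

lemma exists_isStrongCover_fStrong [Finite V] (G : SimpleGraph V) (k : ℕ) :
    ∃ F : Fin (fStrong G k) → Set V, IsStrongCover G k F := by
  let ι := {S : Set V // IsStrongForest G k S}
  refine Nat.sInf_mem (s := {N | ∃ F : Fin N → Set V, IsStrongCover G k F})
    ⟨Nat.card ι, fun i ↦ ((Finite.equivFin ι).symm i).1,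
      fun i ↦ ((Finite.equivFin ι).symm i).2, fun e ⟨S, hS, he⟩ ↦ ?_⟩
  exact ⟨Finite.equivFin ι ⟨S, hS⟩, by simpa using he⟩

lemma fStrong_le_sum [Finite V] {ι : Type*} [Fintype ι] (W : ι → Set V)
    (hW : ∀ e, KValid G k e → ∃ i e', KValid (G.induce (W i)) k e' ∧ e'.map Subtype.val = e) :
    fStrong G k ≤ ∑ i, fStrong (G.induce (W i)) k := by
  choose F hF using fun i ↦ exists_isStrongCover_fStrong (G.induce (W i)) k
  have hcover : IsStrongCover G k fun j : Σ i, Fin (fStrong (G.induce (W i)) k) ↦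
      Subtype.val '' F j.1 j.2 := by
    refine ⟨fun j ↦ isStrongForest_induce_iff.mp ((hF j.1).1 j.2), fun e he ↦ ?_⟩
    obtain ⟨i, e', he', rfl⟩ := hW e he
    obtain ⟨j, hedge, hmem⟩ := (hF i).2 e' he'
    refine ⟨⟨i, j⟩, ?_, fun x hx ↦ ?_⟩
    · induction e' using Sym2.ind with | _ a b => exact hedge
    · obtain ⟨y, hy, rfl⟩ := Sym2.mem_map.mp hx
      exact Set.mem_image_of_mem _ (hmem y hy)
  simpa using fStrong_le_card hcover

end StrongCover

section ForestOrder

variable {V : Type*} [PartialOrder V]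

/-- A partial order in which the vertices below any given vertex form a chain: the ancestor order
of a rooted forest, with roots at the bottom. -/
class IsForestOrder (V : Type*) [PartialOrder V] : Prop where
  isChain_Iic : ∀ v : V, IsChain (· ≤ ·) (Set.Iic v)

/-- The number of proper ancestors of `v`. -/
noncomputable def level (v : V) : ℕ := (Set.Iio v).ncard

lemma level_lt_level [Finite V] {a b : V} (h : a < b) : level a < level b :=
  Set.ncard_lt_ncard (Set.Iio_ssubset_Iio h)

lemma level_mono [Finite V] : Monotone (level : V → ℕ) := fun _ _ h ↦
  Set.ncard_le_ncard (Set.Iio_subset_Iio h)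

lemma level_add_one [Finite V] (v : V) : level v + 1 = (Set.Iic v).ncard := by
  rw [← Set.Iio_insert, Set.ncard_insert_of_notMem (by simp), level]

variable [IsForestOrder V]

lemma le_or_le_of_le {a b v : V} (ha : a ≤ v) (hb : b ≤ v) : a ≤ b ∨ b ≤ a :=
  (IsForestOrder.isChain_Iic v).total ha hb

variable [Finite V]

lemma le_of_level_le {a b v : V} (ha : a ≤ v) (hb : b ≤ v) (h : level a ≤ level b) : a ≤ b :=
  (le_or_le_of_le ha hb).elim id fun hba ↦
    (hba.eq_or_lt.resolve_right fun hlt ↦ (level_lt_level hlt).not_ge h).ge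

lemma level_injOn_Iic (v : V) : Set.InjOn level (Set.Iic v) := fun _ ha _ hb h ↦
  (le_of_level_le ha hb h.le).antisymm (le_of_level_le hb ha h.ge)

lemma exists_le_level_eq (v : V) {i : ℕ} (hi : i ≤ level v) : ∃ a ≤ v, level a = i := by
  have hmaps : level '' Set.Iic v ⊆ Set.Iic (level v) :=
    Set.image_subset_iff.mpr fun _ ha ↦ level_mono ha
  have himage : level '' Set.Iic v = Set.Iic (level v) := by
    refine Set.eq_of_subset_of_ncard_le hmaps ?_ (Set.finite_Iic _)
    rw [(level_injOn_Iic v).ncard_image, ← level_add_one v, ← Finset.coe_Iic,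
      Set.ncard_coe_finset, Nat.card_Iic]
  exact himage.ge hi

/-- The ancestor of `v` at level `i`; the junk value is `v` when `i` exceeds `level v`. -/
noncomputable def anc (v : V) (i : ℕ) : V :=
  if h : i ≤ level v then (exists_le_level_eq v h).choose else v

variable {a v : V} {i j : ℕ}

lemma anc_le (v : V) (i : ℕ) : anc v i ≤ v := by
  unfold anc
  split_ifs with h
  exacts [(exists_le_level_eq v h).choose_spec.1, le_rfl]

lemma level_anc (hi : i ≤ level v) : level (anc v i) = i := by
  rw [anc, dif_pos hi]
  exact (exists_le_level_eq v hi).choose_spec.2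

lemma anc_eq (ha : a ≤ v) (hi : level a = i) : anc v i = a :=
  level_injOn_Iic v (anc_le v i) ha ((level_anc (hi ▸ level_mono ha)).trans hi.symm)

lemma anc_level (v : V) : anc v (level v) = v := anc_eq le_rfl rfl

lemma anc_le_anc (hij : i ≤ j) (hj : j ≤ level v) : anc v i ≤ anc v j :=
  le_of_level_le (anc_le v i) (anc_le v j) <| by
    rwa [level_anc hj, level_anc (hij.trans hj)]

end ForestOrder

section Treedepth

variable {V : Type*} {G : SimpleGraph V}

/-- `G` is a subgraph of the comparability graph of the order on `V`, that is, of the transitive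
closure of the rooted forest when `V` is a forest order. -/
def EdgesComparable [PartialOrder V] (G : SimpleGraph V) : Prop :=
  ∀ ⦃u v⦄, G.Adj u v → u ≤ v ∨ v ≤ u

lemma EdgesComparable.exists_least_of_connected [PartialOrder V] [IsForestOrder V] [Finite V]
    (hG : EdgesComparable G) {S : Set V} (hS : (G.induce S).Connected) : ∃ r, IsLeast S r := by
  obtain ⟨r, hr⟩ := (Set.toFinite S).exists_minimal (Set.nonempty_coe_sort.mp hS.nonempty)
  refine ⟨r, hr.prop, fun s hs ↦ by_contra fun hrs ↦ ?_⟩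
  obtain ⟨x, ⟨-, hrx⟩, w, hw, hwK, hxw⟩ := exists_adj_mem_notMem hS (K := S ∩ Set.Ici r)
    Set.inter_subset_left ⟨r, hr.prop, le_rfl⟩ fun h ↦ hrs (h hs).2
  refine hwK ⟨hw, ?_⟩
  rcases hG hxw with hle | hle
  · exact hrx.trans hle
  · exact (le_or_le_of_le hrx hle).elim id (hr.le_of_le hw)

lemma hasTreedepthAtMost_iff {d : ℕ} : HasTreedepthAtMost G d ↔
    ∃ _ : PartialOrder V, IsForestOrder V ∧ EdgesComparable G ∧
      ∀ v : V, (Set.Iic v).ncard ≤ d := by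
  constructor
  · rintro ⟨le, hle, hchain, hadj, hcard⟩
    let _ : PartialOrder V :=
      { le := le, le_refl := hle.refl, le_trans := hle.trans, le_antisymm := hle.antisymm }
    exact ⟨_, ⟨hchain⟩, hadj, hcard⟩
  · rintro ⟨_, hforest, hadj, hcard⟩
    exact ⟨(· ≤ ·), inferInstance, hforest.isChain_Iic, hadj, hcard⟩

lemma EdgesComparable.hasTreedepthAtMost_induce [PartialOrder V] [IsForestOrder V] [Finite V]
    (hG : EdgesComparable G) (L : Finset ℕ) :
    HasTreedepthAtMost (G.induce {v | level v ∈ L}) L.card := by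
  refine hasTreedepthAtMost_iff.mpr ⟨inferInstance, ⟨fun v ↦ ?_⟩, fun u v huv ↦ hG huv, fun v ↦ ?_⟩
  · exact fun a ha b hb _ ↦ le_or_le_of_le (V := V) (Subtype.coe_le_coe.mpr ha) hb
  · rw [← Set.ncard_coe_finset]
    refine Set.ncard_le_ncard_of_injOn (fun x ↦ level x.1) (fun x _ ↦ x.2) ?_ L.finite_toSet
    exact fun a ha b hb h ↦ Subtype.ext (level_injOn_Iic v.1 ha hb h)

lemma HasTreedepthAtMost.mono {c d : ℕ} (h : HasTreedepthAtMost G c) (hcd : c ≤ d) :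
    HasTreedepthAtMost G d := by
  obtain ⟨le, hle, hchain, hadj, hcard⟩ := h
  exact ⟨le, hle, hchain, hadj, fun v ↦ (hcard v).trans hcd⟩

lemma hasTreedepthAtMost_card [Finite V] (G : SimpleGraph V) :
    HasTreedepthAtMost G (Nat.card V) := by
  let e := Finite.equivFin V
  let _ : LinearOrder V := LinearOrder.lift' e e.injective
  exact hasTreedepthAtMost_iff.mpr ⟨inferInstance, ⟨fun v a _ b _ _ ↦ le_total a b⟩,
    fun u v _ ↦ le_total u v, fun v ↦ Set.ncard_le_card _⟩

lemma hasTreedepthAtMost_of_treedepth_le [Finite V] {d : ℕ} (h : treedepth G ≤ d) :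
    HasTreedepthAtMost G d :=
  HasTreedepthAtMost.mono
    (Nat.sInf_mem (s := {d | HasTreedepthAtMost G d}) ⟨_, hasTreedepthAtMost_card G⟩) h

end Treedepth

section FirstExit

variable {V : Type*} {G : SimpleGraph V}

/-- The first vertex of a walk outside `A`, or the end of the walk if there is none. -/
noncomputable def firstExit (A : Set V) : ∀ {u x : V}, G.Walk u x → V
  | u, _, .nil => u
  | u, _, .cons _ p => if u ∈ A then firstExit A p else u

variable {A B : Set V} {u x : V}

lemma firstExit_of_notMem (hu : u ∉ A) (p : G.Walk u x) : firstExit A p = u := by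
  cases p with
  | nil => rfl
  | cons _ _ => exact if_neg hu

lemma firstExit_notMem (hx : x ∉ A) (p : G.Walk u x) : firstExit A p ∉ A := by
  induction p with
  | nil => exact hx
  | cons _ _ ih =>
    rw [firstExit]
    split_ifs with h
    exacts [ih hx, h]

lemma firstExit_eq_or_mem_or_mem (p : G.Walk u x) :
    firstExit A p = firstExit B p ∨ firstExit A p ∈ B ∨ firstExit B p ∈ A := by
  induction p with
  | nil => exact .inl rfl
  | cons _ _ ih => grind [firstExit]

lemma exists_walk_to_firstExit (A : Set V) (p : G.Walk u x) : ∃ q : G.Walk u (firstExit A p),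
    ∀ z ∈ q.support, z ∈ p.support ∧ (z ∈ A ∨ z = firstExit A p) := by
  induction p with
  | nil => exact ⟨.nil, by simp [firstExit]⟩
  | @cons u v x h p ih =>
    by_cases hu : u ∈ A
    · obtain ⟨q, hq⟩ := ih
      rw [firstExit, if_pos hu]
      exact ⟨.cons h q, by grind [Walk.support_cons]⟩
    · rw [firstExit_of_notMem hu]
      exact ⟨.nil, by simp⟩

end FirstExit

section Petals

variable {V : Type*} [PartialOrder V] {G : SimpleGraph V} {b c x : V} {P : Set V}

/-- An induced tree with at least one edge that lies above `b` except for its root `c`. Petals with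
the same root form a bouquet. -/
structure IsPetal (G : SimpleGraph V) (c b : V) (P : Set V) : Prop where
  root_mem : c ∈ P
  le_of_ne_root : ∀ z ∈ P, z ≠ c → b ≤ z
  nontrivial : P.Nontrivial
  connected : (G.induce P).Connected
  isAcyclic : (G.induce P).IsAcyclic

/-- The children `b` of `x` such that `c` has a neighbour above `b`; in the proof `c` is an ancestor
of `x`. -/
def branches (G : SimpleGraph V) (c x : V) : Set V :=
  {b | x ≤ b ∧ level b = level x + 1 ∧ ∃ w, b ≤ w ∧ G.Adj c w}

lemma IsPetal.exists_adj (hP : IsPetal G c b P) : ∃ w ∈ P, b ≤ w ∧ G.Adj c w := by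
  obtain ⟨_, rfl, w, hw, hwc, hcw⟩ := exists_adj_mem_notMem hP.connected
    (Set.singleton_subset_iff.mpr hP.root_mem) (Set.singleton_nonempty c)
    (fun h ↦ hP.nontrivial.not_subset_singleton h)
  exact ⟨w, hw, hP.le_of_ne_root w hw hwc, hcw⟩

lemma IsPetal.mem_branches (hP : IsPetal G c b P) (hxb : x ≤ b) (hlevel : level b = level x + 1) :
    b ∈ branches G c x :=
  have ⟨w, _, hbw, hcw⟩ := hP.exists_adj
  ⟨hxb, hlevel, w, hbw, hcw⟩

lemma exists_isPetal_of_mem_branches (hb : b ∈ branches G c x) : ∃ P, IsPetal G c b P := by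
  obtain ⟨-, -, w, hbw, hcw⟩ := hb
  refine ⟨{c, w}, Set.mem_insert c {w}, ?_, Set.nontrivial_pair hcw.ne,
    induce_pair_connected_of_adj hcw, isAcyclic_induce_pair c w⟩
  rintro z (rfl | rfl) hz
  exacts [absurd rfl hz, hbw]

lemma connected_induce_bouquet {B : Set V} {P : V → Set V} (hB : B.Nonempty)
    (hP : ∀ b ∈ B, IsPetal G c b (P b)) : (G.induce (⋃ b ∈ B, P b)).Connected := by
  obtain ⟨b₀, hb₀⟩ := hB
  refine induce_connected_of_patches c
    (Set.mem_biUnion hb₀ (hP b₀ hb₀).root_mem) fun {z} hz ↦ ?_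
  obtain ⟨b, hb, hzb⟩ := Set.mem_iUnion₂.mp hz
  exact ⟨P b, Set.subset_biUnion_of_mem hb, (hP b hb).root_mem, hzb,
    (hP b hb).connected.preconnected _ _⟩

variable [IsForestOrder V] [Finite V] {k : ℕ}

lemma EdgesComparable.not_adj_of_level_eq (hG : EdgesComparable G) {u v : V}
    (h : level u = level v) : ¬ G.Adj u v := fun huv ↦
  huv.ne <| (hG huv).elim (fun hle ↦ level_injOn_Iic v hle (Set.self_mem_Iic) h)
    fun hle ↦ level_injOn_Iic u Set.self_mem_Iic hle h

lemma EdgesComparable.eq_of_adj_of_le (hG : EdgesComparable G) {a b x y : V} (hxy : G.Adj x y)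
    (ha : a ≤ x) (hb : b ≤ y) (h : level a = level b) : a = b :=
  (hG hxy).elim (fun hle ↦ level_injOn_Iic y (ha.trans hle) hb h)
    fun hle ↦ level_injOn_Iic x ha (hb.trans hle) h

theorem isStrongForest_iUnion_trees (hG : EdgesComparable G) {ι : Sort*} {T : ι → Set V}
    {r : ι → V} (hr : ∀ i, IsLeast (T i) (r i)) (hlevel : ∀ i j, level (r i) = level (r j))
    (hinj : Function.Injective r) (hconn : ∀ i, (G.induce (T i)).Connected)
    (hac : ∀ i, (G.induce (T i)).IsAcyclic) (hk : ∀ i, k < (T i).ncard) :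
    IsStrongForest G k (⋃ i, T i) := by
  refine isStrongForest_iff.mpr ⟨isAcyclic_induce_iUnion (fun i ↦ (hr i).1) hac ?_
    fun i j ↦ hG.not_adj_of_level_eq (hlevel i j), fun z hz ↦ ?_⟩
  · intro i j x hx _ y hy hxy
    rwa [hinj (hG.eq_of_adj_of_le hxy ((hr i).2 hx) ((hr j).2 hy) (hlevel i j))]
  · obtain ⟨i, hzi⟩ := Set.mem_iUnion.mp hz
    exact ⟨T i, Set.subset_iUnion T i, hzi, hconn i, hk i⟩

section Bouquet

variable {B : Set V} {n t : ℕ} {P : V → Set V}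

lemma isAcyclic_induce_bouquet (hG : EdgesComparable G) (htn : t < n)
    (hB : ∀ b ∈ B, level b = n) (hP : ∀ b ∈ B, IsPetal G (anc b t) b (P b)) :
    (G.induce (⋃ b : B, P b)).IsAcyclic := by
  have hroot : ∀ b : B, level (anc b.1 t) = t := fun b ↦ level_anc (htn.le.trans_eq (hB b b.2).symm)
  refine isAcyclic_induce_iUnion (c := fun b : B ↦ anc b.1 t) (fun b ↦ (hP b b.2).root_mem)
    (fun b ↦ (hP b b.2).isAcyclic) ?_
    fun b b' ↦ hG.not_adj_of_level_eq ((hroot b).trans (hroot b').symm)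
  intro b b' x hx hxc y hy hxy
  have hbx : b ≤ x := (hP b b.2).le_of_ne_root x hx hxc
  by_cases hyc : y = anc b'.1 t
  · have hy_root : anc b.1 t = y := hG.eq_of_adj_of_le hxy ((anc_le b.1 t).trans hbx) le_rfl
      (hyc ▸ (hroot b).trans (hroot b').symm)
    exact hy_root ▸ (hP b b.2).root_mem
  · have hb'y : b' ≤ y := (hP b' b'.2).le_of_ne_root y hy hyc
    rwa [hG.eq_of_adj_of_le hxy hbx hb'y ((hB b b.2).trans (hB b' b'.2).symm)]

lemma ncard_lt_ncard_bouquet {c : V} (hB : ∀ b ∈ B, level b = n) (hBne : B.Nonempty)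
    (hP : ∀ b ∈ B, IsPetal G c b (P b)) : B.ncard < (⋃ b ∈ B, P b).ncard := by
  set Z := ⋃ b ∈ B, P b
  obtain ⟨b₀, hb₀⟩ := hBne
  have hsub : B ⊆ (anc · n) '' (Z \ {c}) := fun b hb ↦ by
    obtain ⟨w, hw, hbw, hcw⟩ := (hP b hb).exists_adj
    exact ⟨w, ⟨Set.mem_biUnion hb hw, hcw.ne'⟩, anc_eq hbw (hB b hb)⟩
  calc B.ncard ≤ ((anc · n) '' (Z \ {c})).ncard := Set.ncard_le_ncard hsub
    _ ≤ (Z \ {c}).ncard := Set.ncard_image_le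
    _ < Z.ncard := Set.ncard_sdiff_singleton_lt_of_mem (Set.mem_biUnion hb₀ (hP b₀ hb₀).root_mem)

theorem isStrongForest_bouquets (hG : EdgesComparable G) (htn : t < n)
    (hB : ∀ b ∈ B, level b = n) (hP : ∀ b ∈ B, IsPetal G (anc b t) b (P b))
    (hk : ∀ b ∈ B, k ≤ {b' ∈ B | anc b' t = anc b t}.ncard) :
    IsStrongForest G k (⋃ b : B, P b) := by
  refine isStrongForest_iff.mpr ⟨isAcyclic_induce_bouquet hG htn hB hP, fun z hz ↦ ?_⟩
  obtain ⟨⟨b, hb⟩, hzb⟩ := Set.mem_iUnion.mp hz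
  set B' := {b' ∈ B | anc b' t = anc b t}
  have hbB' : b ∈ B' := ⟨hb, rfl⟩
  have hP' : ∀ b' ∈ B', IsPetal G (anc b t) b' (P b') := fun b' hb' ↦ hb'.2 ▸ hP b' hb'.1
  refine ⟨⋃ b' ∈ B', P b', ?_, Set.mem_biUnion hbB' hzb, connected_induce_bouquet ⟨b, hbB'⟩ hP',
    (hk b hb).trans_lt (ncard_lt_ncard_bouquet (fun b' hb' ↦ hB b' hb'.1) ⟨b, hbB'⟩ hP')⟩
  rw [Set.iUnion_subtype (· ∈ B)]
  exact Set.biUnion_subset_biUnion_left fun _ hb' ↦ hb'.1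

end Bouquet

end Petals

section TreeEdge

variable {V : Type*} [PartialOrder V] {G : SimpleGraph V} {k : ℕ}

/-- An edge `uv` of `G` with `u < v`, together with an induced tree on more than `k` vertices that
witnesses its `k`-validity, and a walk from `u` to the root of that tree. -/
structure TreeEdge (G : SimpleGraph V) (k : ℕ) where
  (u v root : V)
  tree : Set V
  tail : G.Walk u root
  adj : G.Adj v u
  lt : u < v
  v_mem : v ∈ tree
  tail_subset : ∀ z ∈ tail.support, z ∈ tree
  isLeast_root : IsLeast tree root
  connected : (G.induce tree).Connected
  isAcyclic : (G.induce tree).IsAcyclic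
  lt_ncard : k < tree.ncard

lemma exists_treeEdge [IsForestOrder V] [Finite V] (hG : EdgesComparable G) (hk : 1 ≤ k) {u v : V}
    (huv : u < v) (hvalid : KValid G k s(u, v)) : ∃ e : TreeEdge G k, e.u = u ∧ e.v = v := by
  have hadj : G.Adj u v := (mk_mem_forestEdges.mp hvalid.choose_spec.2).1
  obtain ⟨K, hu, hv, hconn, hac, hcard⟩ := hvalid.exists_tree hk
  obtain ⟨r, hr⟩ := hG.exists_least_of_connected hconn
  obtain ⟨p⟩ := hconn.preconnected ⟨u, hu⟩ ⟨r, hr.1⟩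
  refine ⟨⟨u, v, r, K, p.map (Embedding.induce K).toHom, hadj.symm, huv, hv, fun z hz ↦ ?_, hr,
    hconn, hac, hcard ▸ k.lt_succ_self⟩, rfl, rfl⟩
  obtain ⟨y, -, rfl⟩ := List.mem_map.mp (Walk.support_map _ p ▸ hz)
  exact y.2

lemma exists_branchIndex [Finite V] (G : SimpleGraph V) (c x : V) : ∃ f : V → ℕ,
    Set.MapsTo f (branches G c x) (Set.Iio (branches G c x).ncard) ∧
      Set.InjOn f (branches G c x) := by
  have hfin := (branches G c x).toFinite
  refine hfin.exists_injOn_of_encard_le (t := Set.Iio (branches G c x).ncard) ?_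
  rw [← Finset.coe_Iio, Set.encard_coe_eq_coe_finsetCard, Nat.card_Iio, hfin.cast_ncard_eq]

/-- A numbering of `branches G c x` by the natural numbers below its size. -/
noncomputable def branchIndex [Finite V] (G : SimpleGraph V) (c x : V) : V → ℕ :=
  (exists_branchIndex G c x).choose

lemma branchIndex_lt [Finite V] {c x b : V} (hb : b ∈ branches G c x) :
    branchIndex G c x b < (branches G c x).ncard :=
  (exists_branchIndex G c x).choose_spec.1 hb

lemma branchIndex_injOn [Finite V] (c x : V) :
    Set.InjOn (branchIndex G c x) (branches G c x) :=
  (exists_branchIndex G c x).choose_spec.2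

namespace TreeEdge

variable (e : TreeEdge G k) {i : ℕ}

lemma root_lt_v : e.root < e.v :=
  (e.isLeast_root.2 (e.tail_subset _ e.tail.start_mem_support)).trans_lt e.lt

variable [IsForestOrder V] [Finite V]

/-- The first vertex, on the way from `e.v` through `e.u` to the root of the tree of `e`, that is
not above the level-`i + 1` ancestor of `e.v`. -/
noncomputable def exitAt (i : ℕ) : V :=
  firstExit (Set.Ici (anc e.v (i + 1))) e.tail

lemma exitAt_mem_tree (i : ℕ) : e.exitAt i ∈ e.tree :=
  have ⟨q, hq⟩ := exists_walk_to_firstExit (Set.Ici (anc e.v (i + 1))) e.tail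
  e.tail_subset _ (hq _ q.end_mem_support).1

lemma level_root_le_level_exitAt (i : ℕ) : level e.root ≤ level (e.exitAt i) :=
  level_mono (e.isLeast_root.2 (e.exitAt_mem_tree i))

lemma not_anc_le_exitAt (hi : level e.root ≤ i) (hiv : i < level e.v) :
    ¬ anc e.v (i + 1) ≤ e.exitAt i := by
  refine firstExit_notMem (fun hroot ↦ ?_) e.tail
  have hlevel := level_mono (Set.mem_Ici.mp hroot)
  rw [level_anc hiv] at hlevel
  lia

lemma exists_isPetal (hi : level e.root ≤ i) (hiv : i < level e.v) :
    ∃ P, IsPetal G (e.exitAt i) (anc e.v (i + 1)) P ∧ e.u ∈ P ∧ e.v ∈ P := by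
  obtain ⟨q, hq⟩ := exists_walk_to_firstExit (Set.Ici (anc e.v (i + 1))) e.tail
  let p : G.Walk e.v (e.exitAt i) := .cons e.adj q
  have hp : ∀ z, z ∈ p.support ↔ z = e.v ∨ z ∈ q.support := fun _ ↦ List.mem_cons
  have hp_tree : {z | z ∈ p.support} ⊆ e.tree := fun z hz ↦
    ((hp z).mp hz).elim (· ▸ e.v_mem) fun hz ↦ e.tail_subset z (hq z hz).1
  have hne : e.v ≠ e.exitAt i := fun h ↦ e.not_anc_le_exitAt hi hiv (h ▸ anc_le _ _)
  refine ⟨{z | z ∈ p.support}, ⟨p.end_mem_support, fun z hz hzc ↦ ?_,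
    ⟨e.v, p.start_mem_support, e.exitAt i, p.end_mem_support, hne⟩, p.connected_induce_support,
    isAcyclic_induce_mono hp_tree e.isAcyclic⟩, (hp _).mpr (.inr q.start_mem_support),
    p.start_mem_support⟩
  rcases (hp z).mp hz with rfl | hz
  exacts [anc_le _ _, (hq z hz).2.resolve_right hzc]

lemma exitAt_le_anc (hG : EdgesComparable G) (hi : level e.root ≤ i) (hiv : i < level e.v) :
    e.exitAt i ≤ anc e.v i := by
  obtain ⟨P, hP, -⟩ := e.exists_isPetal hi hiv
  obtain ⟨w, -, hw, hcw⟩ := hP.exists_adj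
  have hnot := e.not_anc_le_exitAt hi hiv
  have hcw : e.exitAt i ≤ w := (hG hcw).resolve_right fun hle ↦ hnot (hw.trans hle)
  have hlt : e.exitAt i < anc e.v (i + 1) :=
    ((le_or_le_of_le hcw hw).resolve_right hnot).lt_of_ne fun h ↦ hnot h.ge
  refine le_of_level_le (hlt.le.trans (anc_le _ _)) (anc_le _ _) ?_
  have hlevel := level_lt_level hlt
  rw [level_anc hiv] at hlevel
  rw [level_anc hiv.le]
  lia

lemma level_exitAt_le (hG : EdgesComparable G) (hi : level e.root ≤ i) (hiv : i < level e.v) :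
    level (e.exitAt i) ≤ i :=
  (level_mono (e.exitAt_le_anc hG hi hiv)).trans_eq (level_anc hiv.le)

lemma exitAt_of_succ_eq_level (hi : i + 1 = level e.v) : e.exitAt i = e.u := by
  refine firstExit_of_notMem ?_ e.tail
  rw [hi, anc_level]
  exact e.lt.not_ge

lemma anc_mem_branches (hi : level e.root ≤ i) (hiv : i < level e.v) :
    anc e.v (i + 1) ∈ branches G (e.exitAt i) (anc e.v i) :=
  have ⟨_, hP, _⟩ := e.exists_isPetal hi hiv
  hP.mem_branches (anc_le_anc i.le_succ hiv) (by rw [level_anc hiv, level_anc hiv.le])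

/-- The exit vertex of `e` at level `i` carries enough branches to root a bouquet with at least `k`
petals. -/
def IsRichAt (i : ℕ) : Prop := k ≤ (branches G (e.exitAt i) (anc e.v i)).ncard

/-- The least level, not below the root, from which on `e` is nowhere rich. -/
noncomputable def base : ℕ :=
  sInf {b | level e.root ≤ b ∧ ∀ i, b ≤ i → i < level e.v → ¬ e.IsRichAt i}

lemma base_spec : level e.root ≤ e.base ∧ ∀ i, e.base ≤ i → i < level e.v → ¬ e.IsRichAt i :=
  Nat.sInf_mem (s := {b | level e.root ≤ b ∧ ∀ i, b ≤ i → i < level e.v → ¬ e.IsRichAt i})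
    ⟨level e.v, level_mono e.root_lt_v.le, fun _ hi hiv ↦ absurd hiv hi.not_gt⟩

lemma level_root_le_base : level e.root ≤ e.base := e.base_spec.1

lemma base_le_level : e.base ≤ level e.v :=
  Nat.sInf_le ⟨level_mono e.root_lt_v.le, fun _ hi hiv ↦ absurd hiv hi.not_gt⟩

lemma isRichAt_of_succ_eq_base (hi : level e.root ≤ i) (hbase : i + 1 = e.base) :
    e.IsRichAt i := by
  by_contra hpoor
  refine Nat.notMem_of_lt_sInf (m := i) (hbase ▸ i.lt_succ_self : i < e.base)
    ⟨hi, fun j hij hjv ↦ ?_⟩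
  rcases hij.eq_or_lt with rfl | hij
  exacts [hpoor, e.base_spec.2 j (hbase ▸ hij) hjv]

/-- The levels of `e.v` and of all exit vertices of `e`. -/
def marks : Set ℕ :=
  insert (level e.v) ((fun i ↦ level (e.exitAt i)) '' Set.Ico (level e.root) (level e.v))

lemma isGreatest_marks (hG : EdgesComparable G) : IsGreatest e.marks (level e.v) := by
  refine ⟨Set.mem_insert _ _, ?_⟩
  rintro _ (rfl | ⟨i, hi, rfl⟩)
  exacts [le_rfl, (e.level_exitAt_le hG hi.1 hi.2).trans hi.2.le]

lemma isLeast_marks (hG : EdgesComparable G) : IsLeast e.marks (level e.root) := by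
  have hlt := level_lt_level e.root_lt_v
  refine ⟨.inr ⟨level e.root, Set.left_mem_Ico.mpr hlt,
    (e.level_exitAt_le hG le_rfl hlt).antisymm (e.level_root_le_level_exitAt _)⟩, ?_⟩
  rintro _ (rfl | ⟨i, -, rfl⟩)
  exacts [hlt.le, e.level_root_le_level_exitAt i]

lemma isGreatest_marks_le (hG : EdgesComparable G) (hi : level e.root ≤ i) (hiv : i < level e.v) :
    IsGreatest {m ∈ e.marks | m ≤ i} (level (e.exitAt i)) := by
  refine ⟨⟨.inr ⟨i, ⟨hi, hiv⟩, rfl⟩, e.level_exitAt_le hG hi hiv⟩, ?_⟩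
  rintro _ ⟨rfl | ⟨j, ⟨hj, hjv⟩, rfl⟩, hle⟩
  · exact absurd hiv hle.not_gt
  rcases firstExit_eq_or_mem_or_mem (A := Set.Ici (anc e.v (i + 1)))
    (B := Set.Ici (anc e.v (j + 1))) e.tail with heq | hij | hji
  · exact (congrArg level heq).ge
  · have hlevel : level (anc e.v (j + 1)) ≤ level (e.exitAt i) := level_mono hij
    rw [level_anc hjv] at hlevel
    exact (e.level_exitAt_le hG hj hjv).trans (j.le_succ.trans hlevel)
  · have hlevel : level (anc e.v (i + 1)) ≤ level (e.exitAt j) := level_mono hji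
    rw [level_anc hiv] at hlevel
    exact absurd hle (Nat.not_le.mpr hlevel)

/-- The number of the branch containing `e.v` at level `i`, for the levels from `e.base` on; all
other levels get the value `k - 1`, which is too large for a branch number at a level that is not
rich. -/
noncomputable def label (i : ℕ) : ℕ :=
  if e.base ≤ i ∧ i < level e.v then branchIndex G (e.exitAt i) (anc e.v i) (anc e.v (i + 1))
  else k - 1

lemma label_lt_iff (hiv : i < level e.v) : e.label i < k - 1 ↔ e.base ≤ i := by
  by_cases hi : e.base ≤ i
  · have hindex := branchIndex_lt (e.anc_mem_branches (e.level_root_le_base.trans hi) hiv)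
    have hpoor : _ < k := not_le.mp (e.base_spec.2 i hi hiv)
    rw [label, if_pos ⟨hi, hiv⟩]
    exact iff_of_true (by lia) hi
  · rw [label, if_neg fun h ↦ hi h.1]
    exact iff_of_false (lt_irrefl _) hi

lemma label_lt (hk : 1 ≤ k) (i : ℕ) : e.label i < k := by
  by_cases h : e.base ≤ i ∧ i < level e.v
  · exact ((e.label_lt_iff h.2).mpr h.1).trans (Nat.sub_one_lt_of_lt hk)
  · rw [label, if_neg h]
    exact Nat.sub_one_lt_of_lt hk

/-- The data that determine `e` once the level-`e.base` ancestor of `e.v` is known. -/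
noncomputable def code : Set ℕ × (ℕ → ℕ) := (e.marks, e.label)

variable {e} {e' : TreeEdge G k}

lemma level_v_eq (hG : EdgesComparable G) (h : e.marks = e'.marks) : level e.v = level e'.v :=
  (e.isGreatest_marks hG).unique (h ▸ e'.isGreatest_marks hG)

lemma level_root_eq (hG : EdgesComparable G) (h : e.marks = e'.marks) :
    level e.root = level e'.root :=
  (e.isLeast_marks hG).unique (h ▸ e'.isLeast_marks hG)

lemma level_exitAt_eq (hG : EdgesComparable G) (h : e.marks = e'.marks) (hi : level e.root ≤ i)
    (hiv : i < level e.v) : level (e.exitAt i) = level (e'.exitAt i) :=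
  (e.isGreatest_marks_le hG hi hiv).unique <| h ▸
    e'.isGreatest_marks_le hG (level_root_eq hG h ▸ hi) (level_v_eq hG h ▸ hiv)

lemma base_le_of_code_eq (hG : EdgesComparable G) (h : e.code = e'.code) : e.base ≤ e'.base := by
  have hmarks : e.marks = e'.marks := congrArg Prod.fst h
  have hlabel : e.label = e'.label := congrArg Prod.snd h
  by_contra! hlt
  have hlt_v : e'.base < level e.v := hlt.trans_le e.base_le_level
  rw [← not_le, ← e.label_lt_iff hlt_v, hlabel,
    e'.label_lt_iff (level_v_eq hG hmarks ▸ hlt_v)] at hlt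
  exact hlt le_rfl

lemma base_eq (hG : EdgesComparable G) (h : e.code = e'.code) : e.base = e'.base :=
  (base_le_of_code_eq hG h).antisymm (base_le_of_code_eq hG h.symm)

lemma exitAt_eq_of_anc_eq (hG : EdgesComparable G) (h : e.marks = e'.marks) (hi : level e.root ≤ i)
    (hiv : i < level e.v) (hanc : anc e.v i = anc e'.v i) : e.exitAt i = e'.exitAt i :=
  level_injOn_Iic (anc e.v i) (e.exitAt_le_anc hG hi hiv)
    (hanc ▸ e'.exitAt_le_anc hG (level_root_eq hG h ▸ hi) (level_v_eq hG h ▸ hiv))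
    (level_exitAt_eq hG h hi hiv)

lemma anc_succ_eq_of_anc_eq (hG : EdgesComparable G) (h : e.code = e'.code) (hi : e.base ≤ i)
    (hiv : i < level e.v) (hanc : anc e.v i = anc e'.v i) :
    anc e.v (i + 1) = anc e'.v (i + 1) := by
  have hmarks : e.marks = e'.marks := congrArg Prod.fst h
  have hiv' : i < level e'.v := level_v_eq hG hmarks ▸ hiv
  have hroot : level e.root ≤ i := e.level_root_le_base.trans hi
  have hexit := exitAt_eq_of_anc_eq hG hmarks hroot hiv hanc
  have hlabel : e.label i = e'.label i := congrFun (congrArg Prod.snd h) i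
  rw [label, label, if_pos ⟨hi, hiv⟩, if_pos ⟨base_eq hG h ▸ hi, hiv'⟩, ← hexit, ← hanc] at hlabel
  refine branchIndex_injOn _ _ (e.anc_mem_branches hroot hiv) ?_ hlabel
  rw [hexit, hanc]
  exact e'.anc_mem_branches (level_root_eq hG hmarks ▸ hroot) hiv'

theorem eq_of_code_eq (hG : EdgesComparable G) (h : e.code = e'.code)
    (hanc : anc e.v e.base = anc e'.v e.base) : e.u = e'.u ∧ e.v = e'.v := by
  have hmarks : e.marks = e'.marks := congrArg Prod.fst h
  have hlevel := level_v_eq hG hmarks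
  have hv : e.v = e'.v := by
    have hall : ∀ i, e.base ≤ i → i ≤ level e.v → anc e.v i = anc e'.v i := fun i hi ↦
      Nat.le_induction (fun _ ↦ hanc)
        (fun j hj ih hjv ↦ anc_succ_eq_of_anc_eq hG h hj hjv (ih (Nat.le_of_succ_le hjv))) i hi
    rw [← anc_level e.v, hall _ e.base_le_level le_rfl, hlevel, anc_level]
  obtain ⟨i, hi⟩ : ∃ i, i + 1 = level e.v :=
    Nat.exists_add_one_eq.mpr (Nat.zero_lt_of_lt (level_lt_level e.lt))
  have hroot : level e.root ≤ i := Nat.le_of_lt_succ ((level_lt_level e.root_lt_v).trans_eq hi.symm)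
  refine ⟨?_, hv⟩
  rw [← e.exitAt_of_succ_eq_level hi, ← e'.exitAt_of_succ_eq_level (hi.trans hlevel)]
  exact exitAt_eq_of_anc_eq hG hmarks hroot (hi ▸ i.lt_succ_self) (congrArg (anc · i) hv)

theorem exists_coloring (hG : EdgesComparable G) (hk : 1 ≤ k) (hlevel : ∀ v : V, level v ≤ k) :
    ∃ color : TreeEdge G k → Set (Fin (k + 1)) × (Fin (k + 1) → Fin k),
      ∀ e e', color e = color e' → e.code = e'.code := by
  refine ⟨fun e ↦ ({m | ↑m ∈ e.marks}, fun i ↦ ⟨e.label i, e.label_lt hk i⟩),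
    fun e e' h ↦ ?_⟩
  obtain ⟨hmarks, hlabel⟩ := Prod.mk.inj h
  have hmark_le : ∀ (e : TreeEdge G k), ∀ m ∈ e.marks, m < k + 1 := fun e m hm ↦
    Nat.lt_succ_of_le (((e.isGreatest_marks hG).2 hm).trans (hlevel e.v))
  have hmarks : e.marks = e'.marks := by
    ext m
    exact ⟨fun hm ↦ (Set.ext_iff.mp hmarks ⟨m, hmark_le e m hm⟩).mp hm,
      fun hm ↦ (Set.ext_iff.mp hmarks ⟨m, hmark_le e' m hm⟩).mpr hm⟩
  refine Prod.ext hmarks (funext fun i ↦ ?_)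
  change e.label i = e'.label i
  by_cases hi : i < k + 1
  · exact congrArg Fin.val (congrFun hlabel ⟨i, hi⟩)
  · have hlabel_eq : ∀ e : TreeEdge G k, e.label i = k - 1 := fun e ↦
      if_neg fun h ↦ hi (h.2.trans_le ((hlevel e.v).trans k.le_succ))
    rw [hlabel_eq, hlabel_eq]

end TreeEdge

end TreeEdge

section Covering

variable {V : Type*} [Finite V] {G : SimpleGraph V} {k : ℕ}

namespace TreeEdge

variable [PartialOrder V] [IsForestOrder V] {C : Set (TreeEdge G k)}

lemma exists_isStrongForest_of_base_eq_level_root (hG : EdgesComparable G)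
    (hC : ∀ e ∈ C, ∀ e' ∈ C, e.code = e'.code) (hbase : ∀ e ∈ C, e.base = level e.root) :
    ∃ F, IsStrongForest G k F ∧ ∀ e ∈ C, e.u ∈ F ∧ e.v ∈ F := by
  choose f hfC hf using fun r : TreeEdge.root '' C ↦ r.2
  refine ⟨⋃ r, (f r).tree, isStrongForest_iUnion_trees hG (fun r ↦ (f r).isLeast_root)
    (fun r r' ↦ level_root_eq hG (congrArg Prod.fst (hC _ (hfC r) _ (hfC r'))))
    (fun r r' h ↦ Subtype.ext ((hf r).symm.trans (h.trans (hf r'))))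
    (fun r ↦ (f r).connected) (fun r ↦ (f r).isAcyclic) fun r ↦ (f r).lt_ncard, fun e he ↦ ?_⟩
  let r : TreeEdge.root '' C := ⟨e.root, e, he, rfl⟩
  have hanc : ∀ e ∈ C, anc e.v e.base = e.root := fun e he ↦
    anc_eq e.root_lt_v.le (hbase e he).symm
  obtain ⟨hu, hv⟩ := eq_of_code_eq hG (hC e he _ (hfC r)) <| by
    rw [hanc e he, base_eq hG (hC e he _ (hfC r)), hanc _ (hfC r), hf r]
  rw [hu, hv]
  exact ⟨Set.mem_iUnion_of_mem r ((f r).tail_subset _ (f r).tail.start_mem_support),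
    Set.mem_iUnion_of_mem r (f r).v_mem⟩

lemma anc_eq_exitAt_of_mem_branches (hG : EdgesComparable G) {e : TreeEdge G k} {b : V} {i : ℕ}
    (hi : level e.root ≤ i) (hiv : i < level e.v) (hb : b ∈ branches G (e.exitAt i) (anc e.v i)) :
    anc b (level (e.exitAt i)) = e.exitAt i :=
  anc_eq ((e.exitAt_le_anc hG hi hiv).trans hb.1) rfl

lemma exists_isPetal_forall_mem (hG : EdgesComparable G)
    (hC : ∀ e ∈ C, ∀ e' ∈ C, e.code = e'.code) {e : TreeEdge G k} (he : e ∈ C) {b : V} {i : ℕ}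
    (hi : level e.root ≤ i) (hbase : e.base = i + 1)
    (hb : b ∈ branches G (e.exitAt i) (anc e.v i)) :
    ∃ P, IsPetal G (e.exitAt i) b P ∧ ∀ e' ∈ C, anc e'.v e'.base = b → e'.u ∈ P ∧ e'.v ∈ P := by
  by_cases h : ∃ e' ∈ C, anc e'.v e'.base = b
  · obtain ⟨e', he', rfl⟩ := h
    have hbase' : e'.base = i + 1 := (base_eq hG (hC e' he' e he)).trans hbase
    have hmarks : e.marks = e'.marks := congrArg Prod.fst (hC e he e' he')
    have hi' : level e'.root ≤ i := level_root_eq hG hmarks ▸ hi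
    have hiv : i < level e.v := hbase.ge.trans e.base_le_level
    have hiv' : i < level e'.v := hbase'.ge.trans e'.base_le_level
    have hexit : e.exitAt i = e'.exitAt i := by
      rw [← anc_eq_exitAt_of_mem_branches hG hi hiv hb, level_exitAt_eq hG hmarks hi hiv, hbase']
      exact anc_eq_exitAt_of_mem_branches hG hi' hiv' (e'.anc_mem_branches hi' hiv')
    obtain ⟨P, hP, hu, hv⟩ := e'.exists_isPetal hi' hiv'
    refine ⟨P, hexit ▸ hbase' ▸ hP, fun e'' he'' h ↦ ?_⟩
    have hcode := hC e'' he'' e' he'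
    obtain ⟨hu_eq, hv_eq⟩ := eq_of_code_eq hG hcode (by rw [h, base_eq hG hcode])
    rw [hu_eq, hv_eq]
    exact ⟨hu, hv⟩
  · obtain ⟨P, hP⟩ := exists_isPetal_of_mem_branches hb
    exact ⟨P, hP, fun e' he' h' ↦ absurd ⟨e', he', h'⟩ h⟩

lemma exists_isStrongForest_of_base_eq_succ (hG : EdgesComparable G)
    (hC : ∀ e ∈ C, ∀ e' ∈ C, e.code = e'.code) {i t : ℕ} (hbase : ∀ e ∈ C, e.base = i + 1)
    (hroot : ∀ e ∈ C, level e.root ≤ i) (ht : ∀ e ∈ C, level (e.exitAt i) = t) (hti : t ≤ i) :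
    ∃ F, IsStrongForest G k F ∧ ∀ e ∈ C, e.u ∈ F ∧ e.v ∈ F := by
  have hiv : ∀ e ∈ C, i < level e.v := fun e he ↦ (hbase e he).ge.trans e.base_le_level
  let B : Set V := {b | ∃ e ∈ C, b ∈ branches G (e.exitAt i) (anc e.v i)}
  have hanc : ∀ e ∈ C, ∀ b ∈ branches G (e.exitAt i) (anc e.v i), anc b t = e.exitAt i :=
    fun e he b hb ↦ ht e he ▸ anc_eq_exitAt_of_mem_branches hG (hroot e he) (hiv e he) hb
  have hpetal : ∀ b ∈ B, ∃ P, IsPetal G (anc b t) b P ∧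
      ∀ e ∈ C, anc e.v e.base = b → e.u ∈ P ∧ e.v ∈ P := by
    rintro b ⟨e, he, hb⟩
    rw [hanc e he b hb]
    exact exists_isPetal_forall_mem hG hC he (hroot e he) (hbase e he) hb
  choose! P hP hmem using hpetal
  refine ⟨⋃ b : B, P b, isStrongForest_bouquets hG (Nat.lt_succ_of_le hti) ?_ hP ?_,
    fun e he ↦ ?_⟩
  · rintro b ⟨e, he, hb⟩
    rw [hb.2.1, level_anc (hiv e he).le]
  · rintro b ⟨e, he, hb⟩
    refine (e.isRichAt_of_succ_eq_base (hroot e he) (hbase e he).symm).trans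
      (Set.ncard_le_ncard fun b' hb' ↦ ⟨⟨e, he, hb'⟩, ?_⟩)
    rw [hanc e he b' hb', hanc e he b hb]
  · have hb : anc e.v e.base ∈ B :=
      ⟨e, he, hbase e he ▸ e.anc_mem_branches (hroot e he) (hiv e he)⟩
    obtain ⟨hu, hv⟩ := hmem _ hb e he rfl
    exact ⟨Set.mem_iUnion_of_mem ⟨_, hb⟩ hu, Set.mem_iUnion_of_mem ⟨_, hb⟩ hv⟩

theorem exists_isStrongForest_of_code_eq (hG : EdgesComparable G)
    (hC : ∀ e ∈ C, ∀ e' ∈ C, e.code = e'.code) :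
    ∃ F, IsStrongForest G k F ∧ ∀ e ∈ C, e.u ∈ F ∧ e.v ∈ F := by
  by_cases hpoor : ∀ e ∈ C, e.base = level e.root
  · exact exists_isStrongForest_of_base_eq_level_root hG hC hpoor
  push Not at hpoor
  obtain ⟨e₀, he₀, hne⟩ := hpoor
  have hlt : level e₀.root < e₀.base := e₀.level_root_le_base.lt_of_ne' hne
  obtain ⟨i, hi⟩ := Nat.exists_add_one_eq.mpr (Nat.zero_lt_of_lt hlt)
  have hroot : level e₀.root ≤ i := Nat.le_of_lt_succ (hlt.trans_eq hi.symm)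
  have hiv : i < level e₀.v := Nat.lt_of_succ_le (hi.trans_le e₀.base_le_level)
  have hmarks : ∀ e ∈ C, e₀.marks = e.marks := fun e he ↦ congrArg Prod.fst (hC e₀ he₀ e he)
  exact exists_isStrongForest_of_base_eq_succ hG hC
    (fun e he ↦ (base_eq hG (hC e he e₀ he₀)).trans hi.symm)
    (fun e he ↦ (level_root_eq hG (hmarks e he)).symm.trans_le hroot)
    (fun e he ↦ (level_exitAt_eq hG (hmarks e he) hroot hiv).symm) (e₀.level_exitAt_le hG hroot hiv)

end TreeEdge

lemma fStrong_le_of_hasTreedepthAtMost_succ (hk : 1 ≤ k) (h : HasTreedepthAtMost G (k + 1)) :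
    fStrong G k ≤ (2 * k) ^ (k + 1) := by
  obtain ⟨_, _, hG, hcard⟩ := hasTreedepthAtMost_iff.mp h
  obtain ⟨color, hcolor⟩ := TreeEdge.exists_coloring hG hk fun v ↦
    Nat.le_of_succ_le_succ ((level_add_one v).trans_le (hcard v))
  choose F hF hmem using fun c ↦ TreeEdge.exists_isStrongForest_of_code_eq hG
    (C := {e | color e = c}) fun e he e' he' ↦ hcolor e e' (he.trans he'.symm)
  have hcover : ∀ u v, u < v → KValid G k s(u, v) → ∃ c, s(u, v) ∈ forestEdges G (F c) := by
    intro u v huv hvalid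
    obtain ⟨e, rfl, rfl⟩ := exists_treeEdge hG hk huv hvalid
    exact ⟨color e, mk_mem_forestEdges.mpr ⟨e.adj.symm, hmem (color e) e rfl⟩⟩
  have hF : IsStrongCover G k F := ⟨hF, Sym2.ind fun u v hvalid ↦ by
    have huv : G.Adj u v := (mk_mem_forestEdges.mp hvalid.choose_spec.2).1
    rcases hG huv with hle | hle
    · exact hcover u v (hle.lt_of_ne huv.ne) hvalid
    · rw [Sym2.eq_swap] at hvalid ⊢
      exact hcover v u (hle.lt_of_ne huv.ne') hvalid⟩
  refine (fStrong_le_card hF).trans_eq ?_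
  simp [mul_pow]

lemma KValid.exists_induce_level [PartialOrder V] (hk : 1 ≤ k) {d : ℕ} (hd : k + 1 ≤ d)
    (hlevel : ∀ v : V, level v < d) {e : Sym2 V} (he : KValid G k e) :
    ∃ L ∈ (Finset.range d).powersetCard (k + 1),
      ∃ e', KValid (G.induce {v | level v ∈ L}) k e' ∧ e'.map Subtype.val = e := by
  induction e using Sym2.ind with | _ u v =>
  have huv : G.Adj u v := (mk_mem_forestEdges.mp he.choose_spec.2).1
  obtain ⟨K, hu, hv, hconn, hac, hcard⟩ := he.exists_tree hk
  obtain ⟨L, hKL, hLd, hL⟩ := Finset.exists_subsuperset_card_eq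
    (s := (K.toFinite.image level).toFinset) (t := Finset.range d) (n := k + 1)
    (by simpa [Set.subset_def] using fun v _ ↦ hlevel v)
    (by rw [← Set.ncard_eq_toFinset_card (level '' K), ← hcard]; exact Set.ncard_image_le)
    (by rwa [Finset.card_range])
  let W : Set V := {v | level v ∈ L}
  have hKW : K ⊆ W := fun z hz ↦
    hKL ((Set.Finite.mem_toFinset _).mpr (Set.mem_image_of_mem level hz))
  have hK : IsStrongForest (G.induce W) k (Subtype.val ⁻¹' K) := by
    rw [isStrongForest_induce_iff, Subtype.image_preimage_coe, Set.inter_eq_right.mpr hKW]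
    exact .of_connected hconn hac (hcard ▸ k.lt_succ_self)
  exact ⟨L, Finset.mem_powersetCard.mpr ⟨hLd, hL⟩, s(⟨u, hKW hu⟩, ⟨v, hKW hv⟩),
    ⟨_, hK, mk_mem_forestEdges.mpr ⟨huv, hu, hv⟩⟩, rfl⟩

end Covering

/-- For all positive integers `k` and `d` with `d ≥ k + 1`, every finite
simple graph `G` of tree-depth at most `d` satisfies `f_k(G) ≤ (2k)^(k+1) * (d choose k+1)`. -/
theorem fStrong_le_of_treedepth_ge {V : Type} [Fintype V] (G : SimpleGraph V) (k d : ℕ)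
    (hk : 1 ≤ k) (hd : k + 1 ≤ d) (htd : treedepth G ≤ d) :
    fStrong G k ≤ (2 * k) ^ (k + 1) * d.choose (k + 1) := by
  obtain ⟨_, _, hG, hdepth⟩ := hasTreedepthAtMost_iff.mp (hasTreedepthAtMost_of_treedepth_le htd)
  have hlevel : ∀ v : V, level v < d := fun v ↦
    Nat.lt_of_succ_le ((level_add_one v).trans_le (hdepth v))
  let W : (Finset.range d).powersetCard (k + 1) → Set V := fun L ↦ {v | level v ∈ L.1}
  have hW : ∀ L, fStrong (G.induce (W L)) k ≤ (2 * k) ^ (k + 1) := fun ⟨L, hL⟩ ↦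
    fStrong_le_of_hasTreedepthAtMost_succ hk <|
      (hG.hasTreedepthAtMost_induce L).mono (Finset.mem_powersetCard.mp hL).2.le
  calc fStrong G k ≤ ∑ L, fStrong (G.induce (W L)) k := fStrong_le_sum W fun e he ↦
        have ⟨L, hL, he'⟩ := he.exists_induce_level hk hd hlevel
        ⟨⟨L, hL⟩, he'⟩
    _ ≤ ∑ _ : (Finset.range d).powersetCard (k + 1), (2 * k) ^ (k + 1) :=
        Finset.sum_le_sum fun L _ ↦ hW L
    _ = (2 * k) ^ (k + 1) * d.choose (k + 1) := by simp [mul_comm]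

end InducedArboricity
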